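/- arXiv:1604.06997 — 3 statements merged into one kernel-verified Lean document; each statement's English description precedes it below -/
import Mathlib

section
/- Let S be a finite arborally satisfied planar point set and let p, q ∈ S with time(q) < time(p) and key(q) < key(p). Then there exists a point r ∈ S \ {p, q} lying in the closed axis-parallel rectangle with corners p and q such that either r is above p (key(r) = key(p) and time(r) < time(p)) or time(r) = time(p) and key(r) < key(p). -/
open Finset

attribute [local instance] Classical.propDecidable

/-- A point in the plane: first coordinate is the key, second is the time. -/
abbrev Pt : Type := ℤ × ℤ

/-- `r` lies in the closed axis-parallel rectangle with opposite corners `p` and `q`. -/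
def inRect (p q r : Pt) : Prop :=
  min p.1 q.1 ≤ r.1 ∧ r.1 ≤ max p.1 q.1 ∧ min p.2 q.2 ≤ r.2 ∧ r.2 ≤ max p.2 q.2

/-- `r` lies in the open axis-parallel rectangle with opposite corners `p` and `q`. -/
def inOpenRect (p q r : Pt) : Prop :=
  min p.1 q.1 < r.1 ∧ r.1 < max p.1 q.1 ∧ min p.2 q.2 < r.2 ∧ r.2 < max p.2 q.2

/-- `S` is an arborally satisfied set. -/
def ArbSat (S : Finset Pt) : Prop :=
  ∀ p ∈ S, ∀ q ∈ S, p.1 = q.1 ∨ p.2 = q.2 ∨ ∃ r ∈ S, r ≠ p ∧ r ≠ q ∧ inRect p q r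

/-- `X` is the permutation point set `{(σ(t), t) : 1 ≤ t ≤ n}` of some permutation `σ` of
`{1, …, n}`. -/
def IsPermPointSet (n : ℕ) (X : Finset Pt) : Prop :=
  ∃ σ : Equiv.Perm (Fin n),
    X = Finset.univ.image (fun t : Fin n => ((((σ t : ℕ) : ℤ) + 1, ((t : ℕ) : ℤ) + 1) : Pt))

/-- The points added by GREEDY at time `t`, given the point set `X` and the set `G` of points
added before time `t`: for the point `p` of `X` with time `t` and each point `q` of time `< t`
with a different key such that the rectangle spanned by `p` and `q` contains no other point of
time `< t`, the point `(key q, t)` is added. -/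
noncomputable def greedyStep (X G : Finset Pt) (t : ℤ) : Finset Pt :=
  (X.filter (fun p => p.2 = t)).biUnion (fun p =>
    (((X ∪ G).filter (fun s => s.2 < t)).filter (fun q =>
      q.1 ≠ p.1 ∧ ∀ r ∈ (X ∪ G).filter (fun s => s.2 < t), inRect p q r → r = q)).image
      (fun q => ((q.1, t) : Pt)))

/-- All points added by GREEDY while processing times `1, …, t`. -/
noncomputable def greedyUpTo (X : Finset Pt) : ℕ → Finset Pt
  | 0 => ∅
  | t + 1 => greedyUpTo X t ∪ greedyStep X (greedyUpTo X t) ((t : ℤ) + 1)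

/-- The set `G` of points added by GREEDY over the whole execution on a permutation point set
`X` of size `n`. -/
noncomputable def greedyG (n : ℕ) (X : Finset Pt) : Finset Pt := greedyUpTo X n

/-- `OP r` is the point of `X` processed at the time at which `r` was added; for `r ∈ X`,
`OP r = r`. -/
noncomputable def OP (X : Finset Pt) (r : Pt) : Pt :=
  ((X.filter (fun p => p.2 = r.2)).toList).headI

/-- The first point of `S` above `p`: the point of `S` with the same key as `p`, smaller time,
and the largest such time. -/
noncomputable def firstAbove (S : Finset Pt) (p : Pt) : Pt :=
  (p.1, (((S.filter (fun q => q.1 = p.1 ∧ q.2 < p.2)).image Prod.snd).max).unbotD 0)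

/-- The pair `CP(p) = (OP(p), OP(q))` where `q` is the first point of `X ∪ G` above `p`. -/
noncomputable def CP (X G : Finset Pt) (p : Pt) : Pt × Pt :=
  (OP X p, OP X (firstAbove (X ∪ G) p))

/-- `CP(p) ∈ MMC` (*zig*). -/
def inMMC (X G : Finset Pt) (p : Pt) : Prop :=
  ((CP X G p).1.1 < p.1 ∧ (CP X G p).2.1 < (CP X G p).1.1 ∧ (CP X G p).2.2 < (CP X G p).1.2)
  ∨ (p.1 < (CP X G p).1.1 ∧ (CP X G p).1.1 < (CP X G p).2.1 ∧ (CP X G p).2.2 < (CP X G p).1.2)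

/-- `CP(p) ∈ MFC` (*zag*). -/
def inMFC (X G : Finset Pt) (p : Pt) : Prop :=
  ((CP X G p).1.1 < p.1 ∧ p.1 ≤ (CP X G p).2.1 ∧ (CP X G p).2.2 < p.2)
  ∨ (p.1 < (CP X G p).1.1 ∧ (CP X G p).2.1 ≤ p.1 ∧ (CP X G p).2.2 < p.2)

/-- A pair is good if no point of `X` lies in the open rectangle spanned by it. -/
def IsGoodPair (X : Finset Pt) (pr : Pt × Pt) : Prop :=
  ∀ r ∈ X, ¬ inOpenRect pr.1 pr.2 r

/-- `B` is a block of `X`: the set of points of `X` whose times lie in some interval, whose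
keys form a set of consecutive integers; blocks are nonempty. -/
def IsBlock (X B : Finset Pt) : Prop :=
  B.Nonempty ∧ (∃ i j : ℤ, B = X.filter (fun p => i ≤ p.2 ∧ p.2 ≤ j)) ∧
    ∃ c d : ℤ, B.image Prod.fst = Finset.Icc c d

/-- `Top(B)`: the point of `B` with the smallest time. -/
noncomputable def TopPt (B : Finset Pt) : Pt :=
  ((B.filter (fun p => ∀ q ∈ B, p.2 ≤ q.2)).toList).headI

/-- A decomposition tree of `X`: a rooted tree whose nodes are blocks of `X`, whose root is
`X`, whose leaves are exactly the singleton blocks, and in which the children of every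
internal node partition it. -/
structure DecompTree (X : Finset Pt) where
  nodes : Finset (Finset Pt)
  parent : Finset Pt → Finset Pt
  isBlock_nodes : ∀ B ∈ nodes, IsBlock X B
  root_mem : X ∈ nodes
  parent_mem : ∀ B ∈ nodes, B ≠ X → parent B ∈ nodes
  ssubset_parent : ∀ B ∈ nodes, B ≠ X → B ⊂ parent B
  leaf_iff : ∀ B ∈ nodes, (¬ ∃ C ∈ nodes, C ≠ X ∧ parent C = B) ↔ B.card = 1
  children_partition : ∀ B ∈ nodes, B.card ≠ 1 →
    ∀ x ∈ B, ∃! C, C ∈ nodes ∧ C ≠ X ∧ parent C = B ∧ x ∈ C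

/-- The children of a node `B` in a decomposition tree. -/
noncomputable def DecompTree.children {X : Finset Pt} (T : DecompTree X) (B : Finset Pt) :
    Finset (Finset Pt) :=
  T.nodes.filter (fun C => C ≠ X ∧ T.parent C = B)

/-- `X` is `k`-decomposable: it admits a decomposition tree in which every node has at most
`k` children. -/
def kDecomposable (k : ℕ) (X : Finset Pt) : Prop :=
  ∃ T : DecompTree X, ∀ B ∈ T.nodes, (T.children B).card ≤ k

/-- `RT(p)`: the node of the decomposition tree closest to the root (i.e. containing all
others) among the nodes `B` with `Top(B) = p`. -/
noncomputable def RT {X : Finset Pt} (T : DecompTree X) (p : Pt) : Finset Pt :=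
  (((T.nodes.filter (fun B => TopPt B = p)).filter
      (fun B => ∀ C ∈ T.nodes, TopPt C = p → C ⊆ B)).toList).headI

/-- The points added by GREEDY (`G`) while processing `Top(B)` that lie to the left of
`Top(B)`. -/
noncomputable def leftSet (G B : Finset Pt) : Finset Pt :=
  G.filter (fun s => s.2 = (TopPt B).2 ∧ s.1 < (TopPt B).1)

/-- `Left(B)`: among the points added by GREEDY while processing `Top(B)` with key less than
`key (Top B)`, the one with the largest key (junk if none exists). -/
noncomputable def leftPt (G B : Finset Pt) : Pt :=
  (((leftSet G B).filter (fun s => ∀ r ∈ leftSet G B, r.1 ≤ s.1)).toList).headI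

/-- The points added by GREEDY (`G`) while processing `Top(B)` that lie to the right of
`Top(B)`. -/
noncomputable def rightSet (G B : Finset Pt) : Finset Pt :=
  G.filter (fun s => s.2 = (TopPt B).2 ∧ (TopPt B).1 < s.1)

/-- `Right(B)`: among the points added by GREEDY while processing `Top(B)` with key greater
than `key (Top B)`, the one with the smallest key (junk if none exists). -/
noncomputable def rightPt (G B : Finset Pt) : Pt :=
  (((rightSet G B).filter (fun s => ∀ r ∈ rightSet G B, s.1 ≤ r.1)).toList).headI

/-!
Among the points of `S` in the rectangle that are smaller than `p` in both coordinates, pick a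
maximal one, `m`. The point that arboral satisfaction places between `m` and `p` can no longer be
smaller than `p` in both coordinates, so it shares one of them with `p`.
-/

/-- Arboral satisfaction of a possibly infinite set of points, for lattice-valued keys and times;
the rectangle with opposite corners `p` and `q` is the interval `Set.uIcc p q` of the product
order. -/
def IsArborallySatisfied {α β : Type*} [Lattice α] [Lattice β] (S : Set (α × β)) : Prop :=
  ∀ p ∈ S, ∀ q ∈ S, p.1 = q.1 ∨ p.2 = q.2 ∨ ∃ r ∈ S, r ≠ p ∧ r ≠ q ∧ r ∈ Set.uIcc p q

theorem inRect_iff_mem_uIcc {p q r : Pt} : inRect p q r ↔ r ∈ Set.uIcc p q := by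
  simp only [inRect, Set.uIcc, Set.mem_Icc, Prod.le_def, Prod.fst_inf, Prod.snd_inf, Prod.fst_sup,
    Prod.snd_sup]
  tauto

theorem arbSat_iff_isArborallySatisfied {S : Finset Pt} :
    ArbSat S ↔ IsArborallySatisfied (S : Set Pt) := by
  simp only [ArbSat, IsArborallySatisfied, inRect_iff_mem_uIcc, Finset.mem_coe]

theorem fst_eq_or_snd_eq_of_lt_of_notMem_Iio_prod_Iio {α β : Type*} [PartialOrder α]
    [PartialOrder β] {p r : α × β} (hlt : r < p) (hr : r ∉ Set.Iio p.1 ×ˢ Set.Iio p.2) :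
    (r.1 = p.1 ∧ r.2 < p.2) ∨ (r.2 = p.2 ∧ r.1 < p.1) := by
  rcases Prod.lt_iff.mp hlt with ⟨h₁, h₂⟩ | ⟨h₁, h₂⟩
  · exact Or.inr ⟨h₂.eq_of_not_lt fun h ↦ hr ⟨h₁, h⟩, h₁⟩
  · exact Or.inl ⟨h₁.eq_of_not_lt fun h ↦ hr ⟨h, h₂⟩, h₂⟩

theorem exists_point_above_or_left_general {α β : Type*} [Lattice α] [Lattice β]
    {S : Set (α × β)} (hS : IsArborallySatisfied S) {p q : α × β}
    (hfin : (S ∩ Set.uIcc p q).Finite) (hp : p ∈ S) (hq : q ∈ S) (ht : q.2 < p.2)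
    (hk : q.1 < p.1) :
    ∃ r ∈ S, r ≠ p ∧ r ≠ q ∧ r ∈ Set.uIcc p q ∧
      ((r.1 = p.1 ∧ r.2 < p.2) ∨ (r.2 = p.2 ∧ r.1 < p.1)) := by
  obtain ⟨m, hqm, hm⟩ :=
    (hfin.inter_of_left (Set.Iio p.1 ×ˢ Set.Iio p.2)).exists_le_maximal
      ⟨⟨hq, Set.right_mem_uIcc⟩, hk, ht⟩
  obtain ⟨⟨hmS, -⟩, hmk, hmt⟩ := hm.prop
  obtain ⟨r, hrS, hrp, hrm, hr⟩ :=
    ((hS p hp m hmS).resolve_left hmk.ne').resolve_left hmt.ne'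
  rw [Set.uIcc_of_ge (Prod.mk_le_mk.mpr ⟨hmk.le, hmt.le⟩)] at hr
  have hr_rect : r ∈ Set.uIcc p q := Set.Icc_subset_uIcc' ⟨hqm.trans hr.1, hr.2⟩
  have hr_notMem : r ∉ Set.Iio p.1 ×ˢ Set.Iio p.2 := fun h ↦
    hrm (hm.eq_of_le ⟨⟨hrS, hr_rect⟩, h⟩ hr.1).symm
  refine ⟨r, hrS, hrp, ?_, hr_rect,
    fst_eq_or_snd_eq_of_lt_of_notMem_Iio_prod_Iio (hr.2.lt_of_ne hrp) hr_notMem⟩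
  rintro rfl
  exact hr_notMem ⟨hk, ht⟩

/-- In a finite arborally satisfied set `S`, for `p, q ∈ S` with
`time(q) < time(p)` and `key(q) < key(p)`, there is a point `r ∈ S \ {p, q}` in the closed
rectangle spanned by `p` and `q` that is above `p` or on the horizontal line of `p`, to the
left of `p`. -/
theorem exists_point_above_or_left (S : Finset Pt) (hS : ArbSat S)
    (p q : Pt) (hp : p ∈ S) (hq : q ∈ S) (ht : q.2 < p.2) (hk : q.1 < p.1) :
    ∃ r ∈ S, r ≠ p ∧ r ≠ q ∧ inRect p q r ∧
      ((r.1 = p.1 ∧ r.2 < p.2) ∨ (r.2 = p.2 ∧ r.1 < p.1)) := by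
  simpa only [inRect_iff_mem_uIcc, Finset.mem_coe] using
    exists_point_above_or_left_general (arbSat_iff_isArborallySatisfied.mp hS)
      (S.finite_toSet.inter_of_left _) hp hq ht hk
end

section
/- For every point p ∈ X, GREEDY does not put any marked point above p; that is, there is no point g ∈ G with key(g) = key(p) and time(g) < time(p). -/
open Finset

attribute [local instance] Classical.propDecidable

/-! GREEDY marks a point only in a column that already contains an earlier point. Hence the earliest
point of each column of `X ∪ G` belongs to `X`, and when keys are distinct it is the only point of
`X` in that column. -/

theorem exists_mem_union_above_of_mem_greedyStep {X G : Finset Pt} {t : ℤ} {g : Pt}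
    (hg : g ∈ greedyStep X G t) : ∃ q ∈ X ∪ G, q.1 = g.1 ∧ q.2 < g.2 := by
  simp only [greedyStep, mem_biUnion, mem_image, mem_filter] at hg
  obtain ⟨_, -, q, ⟨⟨hq, hq_time⟩, -⟩, rfl⟩ := hg
  exact ⟨q, hq, rfl, hq_time⟩

theorem exists_mem_above_of_mem_greedyUpTo {X : Finset Pt} {m : ℕ} {g : Pt}
    (hg : g ∈ greedyUpTo X m) : ∃ x ∈ X, x.1 = g.1 ∧ x.2 < g.2 := by
  induction m generalizing g with
  | zero => exact absurd hg (notMem_empty g)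
  | succ m ih =>
    rcases mem_union.mp hg with hg_old | hg_new
    · exact ih hg_old
    · obtain ⟨q, hq, hq_key, hq_time⟩ := exists_mem_union_above_of_mem_greedyStep hg_new
      rcases mem_union.mp hq with hqX | hqG
      · exact ⟨q, hqX, hq_key, hq_time⟩
      · obtain ⟨x, hx, hx_key, hx_time⟩ := ih hqG
        exact ⟨x, hx, hx_key.trans hq_key, hx_time.trans hq_time⟩

theorem IsPermPointSet.injOn_fst {n : ℕ} {X : Finset Pt} (hX : IsPermPointSet n X) :
    Set.InjOn Prod.fst (X : Set Pt) := by
  obtain ⟨σ, rfl⟩ := hX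
  intro p hp q hq h_key
  obtain ⟨s, -, rfl⟩ := mem_image.mp hp
  obtain ⟨t, -, rfl⟩ := mem_image.mp hq
  have hst : s = t := σ.injective (Fin.ext (by simpa using h_key))
  rw [hst]

theorem no_marked_point_above_general {X : Finset Pt} (hX : Set.InjOn Prod.fst (X : Set Pt))
    (m : ℕ) : ∀ p ∈ X, ¬ ∃ g ∈ greedyUpTo X m, g.1 = p.1 ∧ g.2 < p.2 := by
  rintro p hp ⟨g, hg, hg_key, hg_time⟩
  obtain ⟨x, hx, hx_key, hx_time⟩ := exists_mem_above_of_mem_greedyUpTo hg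
  obtain rfl : x = p := hX hx hp (hx_key.trans hg_key)
  exact lt_asymm hg_time hx_time

/-- GREEDY never puts a marked point above a point of `X`. -/
theorem no_marked_point_above (n : ℕ) (X : Finset Pt) (hX : IsPermPointSet n X) :
    ∀ p ∈ X, ¬ ∃ g ∈ greedyG n X, g.1 = p.1 ∧ g.2 < p.2 :=
  no_marked_point_above_general hX.injOn_fst n
end

section
/- Let p, q, r ∈ X ∪ G with time(q) < time(p) and key(q) < key(p), and suppose r hides q from p. Suppose some point of X ∪ G below q has time greater than time(r) and key less than key(r), and let s be such a point with the smallest time. Then key(OP(s)) < key(r) and time(OP(s)) > time(r). -/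
open Finset

attribute [local instance] Classical.propDecidable

/-!
When GREEDY adds `s` while processing `o = OP s`, it does so because of an earlier point `q'` with
the key of `s` for which the rectangle with corners `o` and `q'` contains no other earlier point.
So if an earlier point `r` has its key between those of `s` and `o`, and not equal to that of `s`,
then `r` must be earlier than `q'`, since otherwise it would lie in that rectangle. Then `q'`
contradicts the minimality of `s`, and this forces the key of `o` to be less than that of `r`.
-/

section

variable {X G : Finset Pt} {n k : ℕ} {r s o : Pt} {t : ℤ}

theorem IsPermPointSet.injOn_snd (hX : IsPermPointSet n X) : Set.InjOn Prod.snd (X : Set Pt) := by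
  obtain ⟨σ, rfl⟩ := hX
  intro a ha b hb hab
  obtain ⟨i, -, rfl⟩ := mem_image.1 ha
  obtain ⟨j, -, rfl⟩ := mem_image.1 hb
  have hij : i = j := Fin.ext (by simpa using hab)
  rw [hij]

theorem mem_greedyStep :
    s ∈ greedyStep X G t ↔ s.2 = t ∧ ∃ o ∈ X, o.2 = t ∧ ∃ q ∈ X ∪ G, q.2 < t ∧ q.1 = s.1 ∧
      q.1 ≠ o.1 ∧ ∀ r ∈ X ∪ G, r.2 < t → inRect o q r → r = q := by
  simp only [greedyStep, mem_biUnion, mem_filter, mem_image]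
  constructor
  · rintro ⟨o, ⟨ho, hot⟩, q, ⟨⟨hq, hqt⟩, hqo, hempty⟩, rfl⟩
    exact ⟨rfl, o, ho, hot, q, hq, hqt, rfl, hqo, fun r hr hrt => hempty r ⟨hr, hrt⟩⟩
  · rintro ⟨hst, o, ho, hot, q, hq, hqt, hqs, hqo, hempty⟩
    exact ⟨o, ⟨ho, hot⟩, q, ⟨⟨hq, hqt⟩, hqo, fun r hr => hempty r hr.1 hr.2⟩,
      Prod.ext hqs hst.symm⟩

theorem greedyStep_filter_snd_lt :
    greedyStep X (G.filter fun s => s.2 < t) t = greedyStep X G t := by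
  have hfilter : ((X ∪ G.filter fun s => s.2 < t).filter fun s => s.2 < t) =
      (X ∪ G).filter fun s => s.2 < t := by
    simp only [filter_union, filter_filter, and_self]
  unfold greedyStep
  rw [hfilter]

theorem mem_greedyUpTo :
    s ∈ greedyUpTo X n ↔ ∃ k < n, s ∈ greedyStep X (greedyUpTo X k) ((k : ℤ) + 1) := by
  induction n with
  | zero => simp [greedyUpTo]
  | succ m ih => simp only [greedyUpTo, mem_union, ih, Nat.exists_lt_succ_right]

theorem filter_snd_lt_greedyUpTo (hk : k ≤ n) :
    ((greedyUpTo X n).filter fun s => s.2 < (k : ℤ) + 1) = greedyUpTo X k := by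
  ext s
  simp only [mem_filter, mem_greedyUpTo]
  constructor
  · rintro ⟨⟨m, -, hs⟩, hsk⟩
    have hsm := (mem_greedyStep.1 hs).1
    exact ⟨m, by omega, hs⟩
  · rintro ⟨m, hm, hs⟩
    have hsm := (mem_greedyStep.1 hs).1
    exact ⟨⟨m, hm.trans_le hk, hs⟩, by omega⟩

theorem mem_greedyStep_of_mem_greedyG (hs : s ∈ greedyG n X) :
    s ∈ greedyStep X (greedyG n X) s.2 := by
  obtain ⟨k, hk, hsk⟩ := mem_greedyUpTo.1 hs
  rwa [(mem_greedyStep.1 hsk).1, ← greedyStep_filter_snd_lt, greedyG,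
    filter_snd_lt_greedyUpTo hk.le]

theorem headI_mem {α : Type*} [Inhabited α] {l : List α} (hl : l ≠ []) : l.headI ∈ l := by
  cases l with
  | nil => exact absurd rfl hl
  | cons a l => exact List.mem_cons_self

theorem OP_mem_filter (ho : o ∈ X) (hos : o.2 = s.2) : OP X s ∈ X.filter fun p => p.2 = s.2 := by
  have hne : (X.filter fun p => p.2 = s.2).toList ≠ [] :=
    Nonempty.toList_ne_nil ⟨o, mem_filter.2 ⟨ho, hos⟩⟩
  exact mem_toList.1 (headI_mem hne)

theorem OP_eq_of_mem (hX : Set.InjOn Prod.snd (X : Set Pt)) (ho : o ∈ X) (hos : o.2 = s.2) :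
    OP X s = o :=
  have hOP := mem_filter.1 (OP_mem_filter ho hos)
  hX hOP.1 ho (hOP.2.trans hos.symm)

theorem snd_OP (hs : s ∈ X ∪ greedyG n X) : (OP X s).2 = s.2 := by
  obtain ⟨o, ho, hos⟩ : ∃ o ∈ X, o.2 = s.2 := by
    rcases mem_union.1 hs with hsX | hsG
    · exact ⟨s, hsX, rfl⟩
    · obtain ⟨-, o, ho, hos, -⟩ := mem_greedyStep.1 (mem_greedyStep_of_mem_greedyG hsG)
      exact ⟨o, ho, hos⟩
  exact (mem_filter.1 (OP_mem_filter ho hos)).2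

theorem exists_fst_eq_between_of_fst_mem_uIcc (hX : Set.InjOn Prod.snd (X : Set Pt))
    (hr : r ∈ X ∪ greedyG n X) (hs : s ∈ X ∪ greedyG n X) (hrs : r.2 < s.2) (hne : r.1 ≠ s.1)
    (hkey : r.1 ∈ Set.uIcc (OP X s).1 s.1) :
    ∃ q ∈ X ∪ greedyG n X, q.1 = s.1 ∧ r.2 < q.2 ∧ q.2 < s.2 := by
  rcases mem_union.1 hs with hsX | hsG
  · rw [OP_eq_of_mem hX hsX rfl, Set.uIcc_self] at hkey
    exact absurd hkey hne
  · obtain ⟨-, o, ho, hos, q, hq, hqs, hq1, -, hempty⟩ :=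
      mem_greedyStep.1 (mem_greedyStep_of_mem_greedyG hsG)
    rw [OP_eq_of_mem hX ho hos, ← hq1] at hkey
    refine ⟨q, hq, hq1, ?_, hqs⟩
    by_contra! hqr
    have hrect : inRect o q r :=
      ⟨hkey.1, hkey.2, min_le_of_right_le hqr, le_max_of_le_left (hos ▸ hrs.le)⟩
    exact hne (hempty r hr hrs hrect ▸ hq1)

theorem hidden_lemma_general (hX : Set.InjOn Prod.snd (X : Set Pt))
    (hr : r ∈ X ∪ greedyG n X) (hs : s ∈ X ∪ greedyG n X) (hkey : s.1 < r.1) (htime : r.2 < s.2)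
    (hmin : ∀ s' ∈ X ∪ greedyG n X, s'.1 = s.1 → r.2 < s'.2 → s.2 ≤ s'.2) :
    (OP X s).1 < r.1 ∧ r.2 < (OP X s).2 := by
  refine ⟨?_, (snd_OP hs).symm ▸ htime⟩
  by_contra! hOP
  obtain ⟨s', hs', hs'1, hrs', hs's⟩ := exists_fst_eq_between_of_fst_mem_uIcc hX hr hs htime
    hkey.ne' (Set.mem_uIcc_of_ge hkey.le hOP)
  exact (hmin s' hs' hs'1 hrs').not_gt hs's

end

/-- hiding lemma, north-west version. Let `p, q, r ∈ X ∪ G` with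
`time(q) < time(p)` and `key(q) < key(p)`, and suppose `r` hides `q` from `p` (i.e. `r`
lies on the top line or in the interior of the rectangle spanned by `q` and `p`). If `s` is
the point of `X ∪ G` of smallest time among those below `q` with time greater than `time(r)`
and key less than `key(r)`, then `key(OP(s)) < key(r)` and `time(OP(s)) > time(r)`. -/
theorem hidden_lemma (n : ℕ) (X : Finset Pt) (hX : IsPermPointSet n X)
    (p q r s : Pt)
    (hp : p ∈ X ∪ greedyG n X) (hq : q ∈ X ∪ greedyG n X) (hr : r ∈ X ∪ greedyG n X)
    (ht : q.2 < p.2) (hk : q.1 < p.1)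
    (hhide : (r.2 = q.2 ∧ q.1 < r.1 ∧ inRect q p r) ∨ inOpenRect q p r)
    (hs : s ∈ X ∪ greedyG n X) (hs1 : s.1 = q.1) (hs2 : q.2 < s.2)
    (hs3 : r.2 < s.2) (hs4 : s.1 < r.1)
    (hmin : ∀ s' ∈ X ∪ greedyG n X,
      s'.1 = q.1 → q.2 < s'.2 → r.2 < s'.2 → s'.1 < r.1 → s.2 ≤ s'.2) :
    (OP X s).1 < r.1 ∧ r.2 < (OP X s).2 := by
  have hqr : q.2 ≤ r.2 := hhide.elim (·.1.ge) fun h => (min_eq_left ht.le ▸ h.2.2.1).le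
  exact hidden_lemma_general hX.injOn_snd hr hs hs4 hs3 fun s' hs' hs'1 hrs' =>
    hmin s' hs' (hs'1.trans hs1) (hqr.trans_lt hrs') hrs' (hs'1 ▸ hs4)
end
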